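/- Let σ : Σ⁺ → Σ⁺ be a topologically mixing one-sided subshift of finite type with finite alphabet, G a countable group, and T_ψ a transitive group extension determined by a map ψ depending on two coordinates. Let f : Σ⁺ → ℝ be Hölder continuous. If G is amenable, then P_Gur(f, T_ψ) = P_Gur(f, T_{ψ^ab}). -/

import Mathlib

/-!
STATEMENT 4: For a topologically mixing one-sided subshift of finite type with finite
alphabet, a countable group `G` and a transitive group extension `T_ψ` (with `ψ` depending
on two coordinates), and a Hölder continuous `f`, if `G` is amenable then the Gurevič pressures satisfy
`P_Gur(f,T_ψ) = P_Gur(f,T_{ψ^ab})`.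
-/

open Filter

namespace DS

/-- The one-sided shift space determined by a 0-1 transition matrix `A` on the alphabet `S`. -/
def Space {S : Type*} (A : S → S → Bool) : Type _ :=
  {x : ℕ → S // ∀ n : ℕ, A (x n) (x (n + 1)) = true}

variable {S : Type*} {A : S → S → Bool}

/-- The (one-sided) shift map. -/
def shift (x : Space A) : Space A :=
  ⟨fun n => x.1 (n + 1), fun n => x.2 (n + 1)⟩

/-- Aperiodicity of the transition matrix: some power of `A` has all entries positive,
i.e. there is `N ≥ 1` such that any two symbols are joined by an admissible word of
length `N`.  (For subshifts of finite type this is topological mixing.) -/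
def Aperiodic (A : S → S → Bool) : Prop :=
  ∃ N : ℕ, 0 < N ∧ ∀ i j : S, ∃ w : ℕ → S,
    w 0 = i ∧ w N = j ∧ ∀ k < N, A (w k) (w (k + 1)) = true

/-- `ψ` depends only on the first two coordinates. -/
def TwoCoord {G : Type*} (ψ : Space A → G) : Prop :=
  ∀ x y : Space A, x.1 0 = y.1 0 → x.1 1 = y.1 1 → ψ x = ψ y

variable {G : Type*} [Group G]

/-- The cocycle `ψⁿ(x) = ψ(x) ψ(σx) ⋯ ψ(σ^{n-1}x)`. -/
def cocycle (ψ : Space A → G) : ℕ → Space A → G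
  | 0, _ => 1
  | n + 1, x => ψ x * cocycle ψ n (shift x)

/-- The group extension `T_ψ(x,g) = (σ x, g ψ(x))`. -/
def T (ψ : Space A → G) (p : Space A × G) : Space A × G :=
  (shift p.1, p.2 * ψ p.1)

/-- Topological transitivity of the group extension `T_ψ` (density of some orbit in the
product of the shift space, with its product topology over the discrete alphabet, and the
discrete group: the orbit enters every cylinder-times-group-element set). -/
def TransitiveExt (ψ : Space A → G) : Prop :=
  ∃ p : Space A × G, ∀ (m : ℕ) (y : Space A) (g : G), ∃ n : ℕ,
    (∀ j < m, ((T ψ)^[n] p).1.1 j = y.1 j) ∧ ((T ψ)^[n] p).2 = g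

/-- Gurevič entropy of the group extension: the exponential growth rate of the number of
periodic points `σⁿ x = x` with trivial cocycle `ψⁿ(x) = e`. -/
noncomputable def hGur (ψ : Space A → G) : ℝ :=
  Filter.atTop.limsup fun n : ℕ =>
    Real.log (Nat.card {x : Space A // shift^[n] x = x ∧ cocycle ψ n x = 1}) / n

/-- Amenability of `G`: existence of a Banach mean, i.e. a linear functional on the
bounded real-valued functions on `G` which is `G`-invariant and lies between `inf` and
`sup`. -/
def Amenable (G : Type*) [Group G] : Prop :=
  ∃ m : (G → ℝ) → ℝ,
    (∀ x y : G → ℝ, m (x + y) = m x + m y) ∧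
    (∀ (c : ℝ) (x : G → ℝ), m (c • x) = c * m x) ∧
    (∀ x : G → ℝ, Bornology.IsBounded (Set.range x) →
      (∀ g : G, m (fun h => x (h * g)) = m x) ∧
      sInf (Set.range x) ≤ m x ∧ m x ≤ sSup (Set.range x))

end DS

open DS

namespace DS

variable {S : Type*} {A : S → S → Bool} {G : Type*} [Group G]

/-- Birkhoff sum `fⁿ = Σ_{j<n} f ∘ σʲ`. -/
noncomputable def birk (f : Space A → ℝ) (n : ℕ) (x : Space A) : ℝ :=
  ∑ j ∈ Finset.range n, f (shift^[j] x)

/-- `f` is Hölder continuous with respect to the metric `d(x,y) = 2^{-inf{n : xₙ ≠ yₙ}}`: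
there are `α > 0` and `C ≥ 0` such that if `x` and `y` agree in the first `n` coordinates
then `|f(x) - f(y)| ≤ C 2^{-nα}`. -/
def HolderF (f : Space A → ℝ) : Prop :=
  ∃ α : ℝ, 0 < α ∧ ∃ C : ℝ, 0 ≤ C ∧ ∀ (n : ℕ) (x y : Space A),
    (∀ j < n, x.1 j = y.1 j) → |f x - f y| ≤ C * 2 ^ (-(n : ℝ) * α)

/-- Gurevič pressure of `f` (viewed as a function on `Σ⁺ × G` depending only on the first
coordinate) with respect to the group extension `T_ψ`:
`P_Gur(f,T_ψ) = limsup (1/n) log Σ_{σⁿx=x, ψⁿ(x)=e} e^{fⁿ(x)}`. -/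
noncomputable def PGur (ψ : Space A → G) (f : Space A → ℝ) : ℝ :=
  Filter.atTop.limsup fun n : ℕ =>
    Real.log (∑' x : {x : Space A // shift^[n] x = x ∧ cocycle ψ n x = 1},
      Real.exp (birk f n x.1)) / n

end DS

open DS

/-!
Fix a point `x` and let `u n g` be the total weight `exp (fⁿ y)` of the loops `y` of length `n` at
the letter `x 0` with `ψⁿ(y) = g`. Bounded distortion makes concatenation of loops a
quasi-supermultiplicativity of `u` with respect to convolution on `G`. Suppose that `u n 1` is
`O(qⁿ)` and let `s < 1 / q`. Then the Green function `H g = ∑ₙ sⁿ u n g` is finite, satisfies a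
Harnack inequality, and is superharmonic in the sense that `∑ₖ H (g k⁻¹) sⁿ u n k ≤ D H g`.

An invariant mean `m` makes `k ↦ m (g ↦ log (H (g k) / H g))` a homomorphism `G → ℝ`, which
therefore vanishes on the commutator subgroup. Since `log t ≤ t - 1`, averaging superharmonicity
gives `sⁿ ∑ₖ u n k ≤ D`, the sum being over the commutator subgroup. Summed over the letters
`x 0`, these sums dominate the partition function of the abelianized extension, which consequently
grows no faster than that of `ψ`.

As `Real.log 0 = 0`, comparing the two growth rates also requires that both partition functions
vanish for the same large `n`. This is a statement about periods: the length of a loop modulo the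
period of the loops with `ψⁿ(y) = 1` is a homomorphism on `G`, hence zero on commutators.
-/

namespace DS

open scoped ENNReal

section InvariantMean

variable {G : Type*} [Group G]

/-- Right-invariant means on the bounded real functions on `G`, in the encoding of `Amenable`:
the functional is defined on all functions but constrained only on the bounded ones. The lower
bound by the infimum follows from `le_sSup` by linearity. -/
structure IsInvariantMean (m : (G → ℝ) →ₗ[ℝ] ℝ) : Prop where
  comp_mul_right {x : G → ℝ} (hx : Bornology.IsBounded (Set.range x)) (g : G) :
    m (fun h => x (h * g)) = m x
  le_sSup {x : G → ℝ} (hx : Bornology.IsBounded (Set.range x)) : m x ≤ sSup (Set.range x)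

lemma Amenable.exists_isInvariantMean (ham : Amenable G) :
    ∃ m : (G → ℝ) →ₗ[ℝ] ℝ, IsInvariantMean m := by
  obtain ⟨m, hadd, hsmul, hm⟩ := ham
  exact ⟨IsLinearMap.mk' m ⟨hadd, hsmul⟩, fun hx => (hm _ hx).1, fun hx => (hm _ hx).2.2⟩

lemma IsInvariantMean.le_of_forall_le {m : (G → ℝ) →ₗ[ℝ] ℝ} (hm : IsInvariantMean m)
    {x : G → ℝ} (hx : Bornology.IsBounded (Set.range x)) {c : ℝ} (h : ∀ g, x g ≤ c) : m x ≤ c :=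
  (hm.le_sSup hx).trans (csSup_le (Set.range_nonempty x) (Set.forall_mem_range.mpr h))

/-- The logarithmic increment of `H` under right translation by `k`. -/
noncomputable def logRatio (H : G → ℝ) (k g : G) : ℝ :=
  Real.log (H (g * k) / H g)

variable {H : G → ℝ}

lemma logRatio_mul (hH : ∀ g, 0 < H g) (a b g : G) :
    logRatio H (a * b) g = logRatio H a g + logRatio H b (g * a) := by
  rw [logRatio, logRatio, logRatio, ← Real.log_mul (div_pos (hH _) (hH _)).ne'
    (div_pos (hH _) (hH _)).ne', div_mul_div_cancel₀' (hH _).ne', mul_assoc]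

lemma logRatio_inv (k g : G) : logRatio H k⁻¹ g = -logRatio H k (g * k⁻¹) := by
  rw [logRatio, logRatio, inv_mul_cancel_right, ← Real.log_inv, inv_div]

lemma logRatio_le_sub_one (hH : ∀ g, 0 < H g) (k g : G) :
    logRatio H k g ≤ H (g * k) / H g - 1 :=
  Real.log_le_sub_one_of_pos (div_pos (hH _) (hH _))

lemma isBounded_range_logRatio (hH : ∀ g, 0 < H g) (harnack : ∀ k, ∃ C, ∀ g, H (g * k) ≤ C * H g)
    (k : G) : Bornology.IsBounded (Set.range (logRatio H k)) := by
  have upper : ∀ k, ∃ C, ∀ g, logRatio H k g ≤ C := by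
    intro k
    obtain ⟨C, hC⟩ := harnack k
    exact ⟨C - 1, fun g => (logRatio_le_sub_one hH k g).trans
      (sub_le_sub_right ((div_le_iff₀ (hH g)).mpr (hC g)) 1)⟩
  obtain ⟨C, hC⟩ := upper k
  obtain ⟨C', hC'⟩ := upper k⁻¹
  refine (Metric.isBounded_Icc (-C') C).subset (Set.range_subset_iff.mpr fun g => ⟨?_, hC g⟩)
  have h := hC' (g * k)
  rw [logRatio_inv, mul_inv_cancel_right] at h
  linarith

/-- By invariance the mean turns the cocycle `logRatio H` into a homomorphism `G → ℝ`. -/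
lemma IsInvariantMean.map_logRatio_eq_zero {m : (G → ℝ) →ₗ[ℝ] ℝ} (hm : IsInvariantMean m)
    (hH : ∀ g, 0 < H g) (harnack : ∀ k, ∃ C, ∀ g, H (g * k) ≤ C * H g) {k : G}
    (hk : k ∈ commutator G) : m (logRatio H k) = 0 := by
  let χ : G →* Multiplicative ℝ := MonoidHom.mk' (fun a => .ofAdd (m (logRatio H a))) fun a b => by
    have hab : logRatio H (a * b) = logRatio H a + fun g => logRatio H b (g * a) :=
      funext (logRatio_mul hH a b)
    rw [hab, map_add, hm.comp_mul_right (isBounded_range_logRatio hH harnack b), ofAdd_add]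
  exact Abelianization.commutator_subset_ker χ hk

lemma isBounded_range_sum {ι X : Type*} {s : Finset ι} {x : ι → X → ℝ}
    (hx : ∀ i ∈ s, Bornology.IsBounded (Set.range (x i))) :
    Bornology.IsBounded (Set.range (∑ i ∈ s, x i)) := by
  have hbound : ∀ i, ∃ R, i ∈ s → ∀ g, ‖x i g‖ ≤ R := by
    intro i
    by_cases hi : i ∈ s
    · obtain ⟨R, hR⟩ := isBounded_iff_forall_norm_le.mp (hx i hi)
      exact ⟨R, fun _ g => hR _ ⟨g, rfl⟩⟩
    · exact ⟨0, fun h => absurd h hi⟩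
  choose R hR using hbound
  refine isBounded_iff_forall_norm_le.mpr ⟨∑ i ∈ s, R i, Set.forall_mem_range.mpr fun g => ?_⟩
  rw [Finset.sum_apply]
  exact norm_sum_le_of_le s fun i hi => hR i hi g

lemma IsInvariantMean.sum_le_of_superharmonic {m : (G → ℝ) →ₗ[ℝ] ℝ} (hm : IsInvariantMean m)
    (hH : ∀ g, 0 < H g) (harnack : ∀ k, ∃ C, ∀ g, H (g * k) ≤ C * H g)
    {K : Finset G} (hK : ∀ k ∈ K, k ∈ commutator G) {U : G → ℝ} (hU : ∀ k, 0 ≤ U k) {c : ℝ}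
    (hc : ∀ g, ∑ k ∈ K, H (g * k⁻¹) * U k ≤ c * H g) : ∑ k ∈ K, U k ≤ c := by
  let y : G → ℝ := ∑ k ∈ K, U k • logRatio H k⁻¹
  have mean_y : m y = 0 := by
    rw [map_sum]
    refine Finset.sum_eq_zero fun k hk => ?_
    rw [map_smul, hm.map_logRatio_eq_zero hH harnack (inv_mem (hK k hk)), smul_zero]
  have y_le : ∀ g, y g ≤ c - ∑ k ∈ K, U k := fun g => calc
    y g = ∑ k ∈ K, U k * logRatio H k⁻¹ g := by simp [y]
    _ ≤ ∑ k ∈ K, U k * (H (g * k⁻¹) / H g - 1) :=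
      Finset.sum_le_sum fun k _ => mul_le_mul_of_nonneg_left (logRatio_le_sub_one hH _ g) (hU k)
    _ = (∑ k ∈ K, H (g * k⁻¹) * U k) / H g - ∑ k ∈ K, U k := by
      rw [Finset.sum_div, ← Finset.sum_sub_distrib]
      exact Finset.sum_congr rfl fun k _ => by ring
    _ ≤ c - ∑ k ∈ K, U k := sub_le_sub_right ((div_le_iff₀ (hH g)).mpr (hc g)) _
  have y_bounded : Bornology.IsBounded (Set.range y) := by
    refine isBounded_range_sum fun k _ => ?_
    have hsmul := (isBounded_range_logRatio hH harnack k⁻¹).smul₀ (U k)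
    rwa [← Set.range_smul] at hsmul
  exact sub_nonneg.mp (mean_y ▸ hm.le_of_forall_le y_bounded y_le)

lemma Amenable.tsum_commutator_le (ham : Amenable G) {h : G → ℝ≥0∞} (h_ne_zero : ∀ g, h g ≠ 0)
    (h_ne_top : ∀ g, h g ≠ ⊤) (harnack : ∀ k, ∃ C ≠ ⊤, ∀ g, h (g * k) ≤ C * h g)
    {U : G → ℝ≥0∞} {c : ℝ≥0∞} (hc : c ≠ ⊤) (hU : ∀ g, ∑' k, h (g * k⁻¹) * U k ≤ c * h g) :
    ∑' k : commutator G, U k ≤ c := by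
  have U_ne_top (k : G) : U k ≠ ⊤ := by
    intro hk
    have hle := (ENNReal.le_tsum k).trans (hU 1)
    rw [hk, ENNReal.mul_top (h_ne_zero _), top_le_iff] at hle
    exact ENNReal.mul_ne_top hc (h_ne_top 1) hle
  have real_superharmonic (K : Finset G) (g : G) :
      ∑ k ∈ K, (h (g * k⁻¹)).toReal * (U k).toReal ≤ c.toReal * (h g).toReal := by
    have hK := ENNReal.toReal_mono (ENNReal.mul_ne_top hc (h_ne_top g))
      ((ENNReal.sum_le_tsum K).trans (hU g))
    rw [ENNReal.toReal_sum fun k _ => ENNReal.mul_ne_top (h_ne_top _) (U_ne_top k)] at hK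
    simpa only [ENNReal.toReal_mul] using hK
  have real_harnack (k : G) : ∃ C : ℝ, ∀ g, (h (g * k)).toReal ≤ C * (h g).toReal := by
    obtain ⟨C, hC, hCk⟩ := harnack k
    refine ⟨C.toReal, fun g => ?_⟩
    rw [← ENNReal.toReal_mul]
    exact ENNReal.toReal_mono (ENNReal.mul_ne_top hC (h_ne_top g)) (hCk g)
  obtain ⟨m, hm⟩ := ham.exists_isInvariantMean
  rw [ENNReal.tsum_eq_iSup_sum]
  refine iSup_le fun K => ?_
  have hK := hm.sum_le_of_superharmonic (fun g => ENNReal.toReal_pos (h_ne_zero g) (h_ne_top g))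
    real_harnack (K := K.map (Function.Embedding.subtype _)) (by simp +contextual)
    (fun k => ENNReal.toReal_nonneg) (real_superharmonic _)
  rw [Finset.sum_map, ← ENNReal.toReal_sum fun k _ => U_ne_top _] at hK
  exact (ENNReal.toReal_le_toReal (ENNReal.sum_ne_top.mpr fun k _ => U_ne_top _) hc).mp hK

end InvariantMean

section Green

variable {G : Type*} {u : ℕ → G → ℝ≥0∞} {q s : ℝ≥0∞}

/-- The Green function (generating function) of a graded family of weights. -/
noncomputable def green (u : ℕ → G → ℝ≥0∞) (s : ℝ≥0∞) (g : G) : ℝ≥0∞ :=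
  ∑' j, s ^ j * u j g

lemma green_ne_zero (hs : s ≠ 0) {g : G} (hpos : ∃ n, u n g ≠ 0) : green u s g ≠ 0 := by
  obtain ⟨n, hn⟩ := hpos
  exact fun h => mul_ne_zero (pow_ne_zero n hs) hn (ENNReal.tsum_eq_zero.mp h n)

lemma green_ne_top {K : ℝ≥0∞} (hK : K ≠ ⊤) (hsq : s * q < 1) {g : G}
    (hg : ∀ n, u n g ≤ K * q ^ n) : green u s g ≠ ⊤ := by
  have hle : green u s g ≤ K * ∑' j, (s * q) ^ j := calc
    green u s g ≤ ∑' j, s ^ j * (K * q ^ j) :=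
      ENNReal.tsum_le_tsum fun j => mul_le_mul_right (hg j) (s ^ j)
    _ = ∑' j, K * (s * q) ^ j := tsum_congr fun j => by rw [mul_pow]; ring
    _ = K * ∑' j, (s * q) ^ j := ENNReal.tsum_mul_left
  refine ne_top_of_le_ne_top (ENNReal.mul_ne_top hK ?_) hle
  exact (tsum_geometric_lt_top.mpr hsq).ne

end Green

section QuasiSupermultiplicative

variable {G : Type*} [Group G] {u : ℕ → G → ℝ≥0∞} {D B q s : ℝ≥0∞}

/-- A family of weights on `G` graded by length is quasi-supermultiplicative if the convolution of
its `m`-th and `n`-th members is at most `D` times the `(m + n)`-th. -/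
def QuasiSupermultiplicative (u : ℕ → G → ℝ≥0∞) (D : ℝ≥0∞) : Prop :=
  ∀ m n g, ∑' k, u m (g * k⁻¹) * u n k ≤ D * u (m + n) g

lemma QuasiSupermultiplicative.mul_le (hu : QuasiSupermultiplicative u D) (m n : ℕ) (a b : G) :
    u m a * u n b ≤ D * u (m + n) (a * b) := by
  refine le_trans ?_ (hu m n (a * b))
  simpa using ENNReal.le_tsum (f := fun k => u m (a * b * k⁻¹) * u n k) b

lemma QuasiSupermultiplicative.mul_ne_zero (hu : QuasiSupermultiplicative u D) {m n : ℕ} {a b : G}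
    (ha : u m a ≠ 0) (hb : u n b ≠ 0) : u (m + n) (a * b) ≠ 0 :=
  right_ne_zero_of_mul ((pos_iff_ne_zero.mpr (_root_.mul_ne_zero ha hb)).trans_le
    (hu.mul_le m n a b)).ne'

lemma QuasiSupermultiplicative.exists_le_mul_pow (hu : QuasiSupermultiplicative u D) (hD : D ≠ ⊤)
    (hB : B ≠ ⊤) (hq : q ≠ ⊤) (hone : ∀ n, u n 1 ≤ B * q ^ n) {g : G} (hpos : ∃ n, u n g⁻¹ ≠ 0) :
    ∃ K ≠ ⊤, ∀ n, u n g ≤ K * q ^ n := by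
  obtain ⟨m, hm⟩ := hpos
  refine ⟨D * (B * q ^ m) / u m g⁻¹, ENNReal.div_ne_top (by finiteness) hm, fun n => ?_⟩
  have hprod : u n g * u m g⁻¹ ≤ D * (B * q ^ (n + m)) := by
    refine (hu.mul_le n m g g⁻¹).trans ?_
    rw [mul_inv_cancel]
    gcongr
    exact hone _
  rw [← ENNReal.le_div_iff_mul_le (Or.inl hm) (Or.inr (by finiteness))] at hprod
  refine hprod.trans_eq ?_
  rw [pow_add, div_eq_mul_inv, div_eq_mul_inv]
  ring

lemma QuasiSupermultiplicative.green_superharmonic (hu : QuasiSupermultiplicative u D)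
    (s : ℝ≥0∞) (n : ℕ) (g : G) :
    ∑' k, green u s (g * k⁻¹) * (s ^ n * u n k) ≤ D * green u s g := calc
  ∑' k, green u s (g * k⁻¹) * (s ^ n * u n k)
      = ∑' k, ∑' j, s ^ (j + n) * (u j (g * k⁻¹) * u n k) :=
    tsum_congr fun k => by
      rw [green, ← ENNReal.tsum_mul_right]
      exact tsum_congr fun j => by rw [pow_add]; ring
  _ = ∑' j, s ^ (j + n) * ∑' k, u j (g * k⁻¹) * u n k := by
    rw [ENNReal.tsum_comm]
    exact tsum_congr fun j => ENNReal.tsum_mul_left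
  _ ≤ ∑' j, s ^ (j + n) * (D * u (j + n) g) :=
    ENNReal.tsum_le_tsum fun j => mul_le_mul_right (hu j n g) _
  _ = D * ∑' j, s ^ (j + n) * u (j + n) g := by
    rw [← ENNReal.tsum_mul_left]
    exact tsum_congr fun j => mul_left_comm _ _ _
  _ ≤ D * green u s g := by
    gcongr
    exact ENNReal.tsum_comp_le_tsum_of_injective (add_left_injective n) fun j => s ^ j * u j g

lemma QuasiSupermultiplicative.green_mul_le (hu : QuasiSupermultiplicative u D) (hs : s ≠ 0)
    (hs' : s ≠ ⊤) {k : G} {n : ℕ} (hk : u n k⁻¹ ≠ 0) (hk' : u n k⁻¹ ≠ ⊤) (g : G) :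
    green u s (g * k) ≤ D / (s ^ n * u n k⁻¹) * green u s g := by
  have hterm := (ENNReal.le_tsum k⁻¹).trans (hu.green_superharmonic s n g)
  rw [inv_inv, ← ENNReal.le_div_iff_mul_le
    (Or.inl (_root_.mul_ne_zero (pow_ne_zero n hs) hk)) (Or.inl (by finiteness))] at hterm
  exact hterm.trans_eq (ENNReal.mul_div_right_comm)

lemma QuasiSupermultiplicative.pow_mul_tsum_commutator_le (hu : QuasiSupermultiplicative u D)
    (ham : Amenable G) (hD : D ≠ ⊤) (hpos : ∀ g, ∃ n, u n g ≠ 0) (hB : B ≠ ⊤) (hq : q ≠ ⊤)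
    (hone : ∀ n, u n 1 ≤ B * q ^ n) (hs : s ≠ 0) (hs' : s ≠ ⊤) (hsq : s * q < 1) (n : ℕ) :
    s ^ n * ∑' k : commutator G, u n k ≤ D := by
  have growth := fun g => hu.exists_le_mul_pow hD hB hq hone (hpos g⁻¹)
  have u_ne_top (n : ℕ) (g : G) : u n g ≠ ⊤ := by
    obtain ⟨K, hK, hle⟩ := growth g
    exact ne_top_of_le_ne_top (by finiteness) (hle n)
  have green_finite (g : G) : green u s g ≠ ⊤ := by
    obtain ⟨K, hK, hle⟩ := growth g
    exact green_ne_top hK hsq hle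
  have harnack (k : G) : ∃ C ≠ ⊤, ∀ g, green u s (g * k) ≤ C * green u s g := by
    obtain ⟨j, hj⟩ := hpos k⁻¹
    exact ⟨_, ENNReal.div_ne_top hD (_root_.mul_ne_zero (pow_ne_zero j hs) hj),
      hu.green_mul_le hs hs' hj (u_ne_top _ _)⟩
  rw [← ENNReal.tsum_mul_left]
  exact ham.tsum_commutator_le (U := fun k => s ^ n * u n k) (fun g => green_ne_zero hs (hpos g))
    green_finite harnack hD (hu.green_superharmonic s n)

lemma QuasiSupermultiplicative.tsum_commutator_le (hu : QuasiSupermultiplicative u D)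
    (ham : Amenable G) (hD : D ≠ ⊤) (hpos : ∀ g, ∃ n, u n g ≠ 0) (hB : B ≠ ⊤) (hq : q ≠ ⊤)
    (hone : ∀ n, u n 1 ≤ B * q ^ n) (n : ℕ) :
    ∑' k : commutator G, u n k ≤ D * q ^ n := by
  have hle : ∀ r ∈ Set.Ioo q ⊤, ∑' k : commutator G, u n k ≤ D * r ^ n := by
    rintro r ⟨hqr, hr⟩
    have hr0 : r ≠ 0 := hqr.ne_bot
    have hs := hu.pow_mul_tsum_commutator_le ham hD hpos hB hq hone (ENNReal.inv_ne_zero.mpr hr.ne)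
      (ENNReal.inv_ne_top.mpr hr0)
      (by rw [mul_comm, ← div_eq_mul_inv]; exact ENNReal.div_lt_of_lt_mul (by rwa [one_mul])) n
    rwa [← ENNReal.inv_pow, mul_comm, ← div_eq_mul_inv,
      ENNReal.div_le_iff (pow_ne_zero n hr0) (ENNReal.pow_ne_top hr.ne)] at hs
  have := nhdsGT_neBot_of_exists_gt ⟨⊤, hq.lt_top⟩
  refine ge_of_tendsto (x := nhdsWithin q (Set.Ioi q))
    (ENNReal.Tendsto.const_mul ((ENNReal.continuous_pow n).continuousWithinAt) (Or.inr hD)) ?_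
  filter_upwards [Ioo_mem_nhdsGT hq.lt_top] with r hr using hle r hr

lemma exists_forall_le_mul_pow_of_eventually {a : ℕ → ℝ≥0∞} (ha : ∀ n, a n ≠ ⊤) (hB : B ≠ ⊤)
    (hq : q ≠ 0) (hq' : q ≠ ⊤) (h : ∀ᶠ n in atTop, a n ≤ B * q ^ n) :
    ∃ B' ≠ ⊤, ∀ n, a n ≤ B' * q ^ n := by
  obtain ⟨N, hN⟩ := eventually_atTop.mp h
  refine ⟨B + ∑ j ∈ Finset.range N, a j / q ^ j, ENNReal.add_ne_top.mpr ⟨hB,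
    ENNReal.sum_ne_top.mpr fun j _ => ENNReal.div_ne_top (ha j) (pow_ne_zero j hq)⟩, fun n => ?_⟩
  rcases lt_or_ge n N with hn | hn
  · calc a n = a n / q ^ n * q ^ n :=
        (ENNReal.div_mul_cancel (pow_ne_zero n hq) (ENNReal.pow_ne_top hq')).symm
      _ ≤ _ := mul_le_mul_left ((Finset.single_le_sum (f := fun j => a j / q ^ j)
        (fun _ _ => zero_le) (Finset.mem_range.mpr hn)).trans le_add_self) _
  · exact (hN n hn).trans (mul_le_mul_left le_self_add _)

end QuasiSupermultiplicative

section Period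

variable {G : Type*} [Group G] {E : ℕ → G → Prop}

lemma dvd_of_mem_commutator (hmul : ∀ {m n a b}, E m a → E n b → E (m + n) (a * b))
    (hE : ∀ g, ∃ n, E n g) {p : ℕ} (hp : ∀ n, E n 1 → p ∣ n) {n : ℕ} {k : G}
    (hk : k ∈ commutator G) (hn : E n k) : p ∣ n := by
  have hcast (n : ℕ) (h : E n 1) : (n : ZMod p) = 0 := (ZMod.natCast_eq_zero_iff n p).mpr (hp n h)
  choose ℓ hℓ using hE
  have cast_eq {n : ℕ} {g : G} (h : E n g) : (n : ZMod p) = ℓ g := by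
    have hn := hcast _ (mul_inv_cancel g ▸ hmul h (hℓ g⁻¹))
    have hg := hcast _ (mul_inv_cancel g ▸ hmul (hℓ g) (hℓ g⁻¹))
    push_cast at hn hg
    exact add_right_cancel (hn.trans hg.symm)
  let χ : G →* Multiplicative (ZMod p) := MonoidHom.mk' (fun g => .ofAdd (ℓ g)) fun a b => by
    rw [← ofAdd_add, ← cast_eq (hmul (hℓ a) (hℓ b)), Nat.cast_add]
  have hχ : χ k = 1 := Abelianization.commutator_subset_ker χ hk
  exact (ZMod.natCast_eq_zero_iff n p).mp ((cast_eq hn).trans hχ)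

lemma eventually_one_of_mem_commutator (hmul : ∀ {m n a b}, E m a → E n b → E (m + n) (a * b))
    (hE : ∀ g, ∃ n, E n g) : ∀ᶠ n in atTop, ∀ k ∈ commutator G, E n k → E n 1 := by
  let lengths : AddSubmonoid ℕ :=
    { carrier := {n | n = 0 ∨ E n 1}
      zero_mem' := Or.inl rfl
      add_mem' := by
        rintro a b (rfl | ha) (rfl | hb)
        · exact Or.inl rfl
        · exact Or.inr (by rwa [zero_add])
        · exact Or.inr ha
        · exact Or.inr (mul_one (1 : G) ▸ hmul ha hb) }
  obtain ⟨N, hN⟩ := Nat.exists_mem_closure_of_ge (lengths : Set ℕ)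
  rw [AddSubmonoid.closure_eq] at hN
  filter_upwards [eventually_ge_atTop N, eventually_gt_atTop 0] with n hnN hn0 k hk hnk
  have hdvd : Nat.setGcd (lengths : Set ℕ) ∣ n :=
    dvd_of_mem_commutator hmul hE (fun j hj => Nat.setGcd_dvd_of_mem (Or.inr hj)) hk hnk
  exact (hN n hnN hdvd).resolve_left hn0.ne'

end Period

section GrowthRate

/-- The exponential growth rate of a sequence of partition functions. As `Real.log 0 = 0`, a
vanishing term contributes `0` instead of `-∞`. -/
noncomputable def growthRate (a : ℕ → ℝ≥0∞) : ℝ :=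
  atTop.limsup fun n : ℕ => Real.log (a n).toReal / n

variable {x D p q : ℝ≥0∞} {n : ℕ} {a b : ℕ → ℝ≥0∞}

lemma log_toReal_div_le (hx : x ≠ 0) (hD : D ≠ ⊤) (hq : q ≠ ⊤) (hn : n ≠ 0) (h : x ≤ D * q ^ n) :
    Real.log x.toReal / n ≤ Real.log D.toReal / n + Real.log q.toReal := by
  have hne : D * q ^ n ≠ 0 := ((pos_iff_ne_zero.mpr hx).trans_le h).ne'
  have hD0 : 0 < D.toReal := ENNReal.toReal_pos (left_ne_zero_of_mul hne) hD
  have hq0 : 0 < q.toReal := ENNReal.toReal_pos (ne_zero_pow hn (right_ne_zero_of_mul hne)) hq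
  have htop : D * q ^ n ≠ ⊤ := by finiteness
  have hlog := Real.log_le_log (ENNReal.toReal_pos hx (ne_top_of_le_ne_top htop h))
    (ENNReal.toReal_mono htop h)
  rw [ENNReal.toReal_mul, ENNReal.toReal_pow, Real.log_mul hD0.ne' (pow_pos hq0 n).ne',
    Real.log_pow] at hlog
  have hn' : (0 : ℝ) < n := by positivity
  rw [div_add' _ _ _ hn'.ne', div_le_div_iff_of_pos_right hn']
  linarith

lemma log_toReal_le_div (hp : p ≠ 0) (hx : x ≠ ⊤) (hn : n ≠ 0) (h : p ^ n ≤ x) :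
    Real.log p.toReal ≤ Real.log x.toReal / n := by
  have hp' : p ≠ ⊤ := fun hp' => hx (top_le_iff.mp (by rwa [hp', ENNReal.top_pow hn] at h))
  rw [le_div_iff₀ (by positivity), mul_comm, ← Real.log_pow, ← ENNReal.toReal_pow]
  exact Real.log_le_log (ENNReal.toReal_pos (pow_ne_zero n hp) (by finiteness))
    (ENNReal.toReal_mono hx h)

lemma le_ofReal_exp_pow (hx : x ≠ ⊤) {t : ℝ} (hn : n ≠ 0) (h : Real.log x.toReal / n ≤ t) :
    x ≤ ENNReal.ofReal (Real.exp t) ^ n := by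
  rcases eq_or_ne x 0 with rfl | hx0
  · exact zero_le
  rw [← ENNReal.ofReal_pow (Real.exp_pos t).le, ← Real.exp_nat_mul,
    ENNReal.le_ofReal_iff_toReal_le hx (Real.exp_pos _).le,
    ← Real.log_le_iff_le_exp (ENNReal.toReal_pos hx0 hx), mul_comm]
  exact (div_le_iff₀ (by positivity)).mp h

lemma isBoundedUnder_log_toReal_div (hp : p ≠ 0) (hq : q ≠ ⊤)
    (h : ∀ᶠ n in atTop, a n ≠ 0 → p ^ n ≤ a n ∧ a n ≤ q ^ n) :
    IsBoundedUnder (· ≤ ·) atTop fun n : ℕ => |Real.log (a n).toReal / n| := by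
  refine isBoundedUnder_of_eventually_le (a := |Real.log p.toReal| + |Real.log q.toReal|) ?_
  filter_upwards [h, eventually_ne_atTop 0] with n hn hn0
  rcases eq_or_ne (a n) 0 with h0 | h0
  · rw [h0, ENNReal.toReal_zero, Real.log_zero, zero_div, abs_zero]
    positivity
  obtain ⟨hlower, hupper⟩ := hn h0
  have hle := log_toReal_div_le h0 ENNReal.one_ne_top hq hn0 (by rwa [one_mul])
  rw [ENNReal.toReal_one, Real.log_one, zero_div, zero_add] at hle
  have hge := log_toReal_le_div hp (ne_top_of_le_ne_top (by finiteness) hupper) hn0 hlower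
  rw [abs_le]
  constructor
  · linarith [neg_abs_le (Real.log p.toReal), abs_nonneg (Real.log q.toReal)]
  · linarith [le_abs_self (Real.log q.toReal), abs_nonneg (Real.log p.toReal)]

lemma growthRate_mono (ha : IsBoundedUnder (· ≤ ·) atTop fun n : ℕ => |Real.log (a n).toReal / n|)
    (hb : IsBoundedUnder (· ≤ ·) atTop fun n : ℕ => |Real.log (b n).toReal / n|)
    (hb_top : ∀ᶠ n in atTop, b n ≠ ⊤) (hab : ∀ᶠ n in atTop, a n ≤ b n)
    (hzero : ∀ᶠ n in atTop, a n = 0 → b n = 0) : growthRate a ≤ growthRate b := by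
  refine limsup_le_limsup ?_ (isBoundedUnder_le_abs.mp ha).2.isCoboundedUnder_le
    (isBoundedUnder_le_abs.mp hb).1
  filter_upwards [hb_top, hab, hzero] with n htop hle h0
  rcases eq_or_ne (a n) 0 with ha0 | ha0
  · rw [ha0, h0 ha0]
  · have hlog := Real.log_le_log (ENNReal.toReal_pos ha0 (ne_top_of_le_ne_top htop hle))
      (ENNReal.toReal_mono htop hle)
    gcongr

lemma growthRate_le_of_forall_pow
    (ha : IsBoundedUnder (· ≤ ·) atTop fun n : ℕ => |Real.log (a n).toReal / n|)
    (hb : IsBoundedUnder (· ≤ ·) atTop fun n : ℕ => |Real.log (b n).toReal / n|)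
    (ha_top : ∀ᶠ n in atTop, a n ≠ ⊤) (hzero : ∀ᶠ n in atTop, b n = 0 → a n = 0)
    (hgrowth : ∀ q, q ≠ 0 → q ≠ ⊤ → (∀ᶠ n in atTop, a n ≤ q ^ n) →
      ∃ D ≠ ⊤, ∀ᶠ n in atTop, b n ≤ D * q ^ n) :
    growthRate b ≤ growthRate a := by
  refine le_of_forall_gt_imp_ge_of_dense fun e he => ?_
  obtain ⟨t, hat, hte⟩ := exists_between he
  have log_lt := eventually_lt_of_limsup_lt hat (isBoundedUnder_le_abs.mp ha).1
  have a_le : ∀ᶠ n in atTop, a n ≤ ENNReal.ofReal (Real.exp t) ^ n := by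
    filter_upwards [log_lt, ha_top, eventually_ne_atTop 0] with n hlt htop hn
      using le_ofReal_exp_pow htop hn hlt.le
  obtain ⟨D, hD, b_le⟩ := hgrowth _ (ENNReal.ofReal_pos.mpr (Real.exp_pos t)).ne'
    ENNReal.ofReal_ne_top a_le
  have log_D_lt : ∀ᶠ n : ℕ in atTop, Real.log D.toReal / n < e - t :=
    (tendsto_const_div_atTop_nhds_zero_nat _).eventually_lt_const (sub_pos.mpr hte)
  refine limsup_le_of_le (isBoundedUnder_le_abs.mp hb).2.isCoboundedUnder_le ?_
  filter_upwards [log_lt, b_le, log_D_lt, hzero, eventually_ne_atTop 0] with n hlt hle hDlt h0 hn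
  rcases eq_or_ne (b n) 0 with hb0 | hb0
  · rw [h0 hb0] at hlt
    rw [hb0]
    exact (hlt.trans hte).le
  · have hlog := log_toReal_div_le hb0 hD ENNReal.ofReal_ne_top hn hle
    rw [ENNReal.toReal_ofReal (Real.exp_pos t).le, Real.log_exp] at hlog
    linarith

end GrowthRate

section Shift

variable {S : Type*} {A : S → S → Bool}

lemma shift_iterate_apply (n : ℕ) (x : Space A) (i : ℕ) : (shift^[n] x).1 i = x.1 (i + n) := by
  induction n generalizing x with
  | zero => rfl
  | succ n ih => exact (ih (shift x)).trans (congrArg x.1 (add_assoc i n 1))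

lemma apply_eq_of_shift_iterate_eq {n : ℕ} {x y : Space A} (h : shift^[n] y = x) :
    y.1 n = x.1 0 := by
  rw [← h, shift_iterate_apply, zero_add]

lemma eq_of_shift_iterate_eq {n : ℕ} {y z : Space A} (h : ∀ i < n, y.1 i = z.1 i)
    (hs : shift^[n] y = shift^[n] z) : y = z := by
  refine Subtype.ext (funext fun i => ?_)
  rcases lt_or_ge i n with hi | hi
  · exact h i hi
  · obtain ⟨j, rfl⟩ := Nat.exists_eq_add_of_le' hi
    rw [← shift_iterate_apply, hs, shift_iterate_apply]

lemma periodic_of_shift_iterate_eq {n : ℕ} {z : Space A} (h : shift^[n] z = z) :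
    Function.Periodic z.1 n := fun i => by
  rw [← shift_iterate_apply, h]

lemma eq_of_shift_iterate_eq_self {n : ℕ} (hn : 0 < n) {y z : Space A} (hy : shift^[n] y = y)
    (hz : shift^[n] z = z) (h : ∀ i < n, y.1 i = z.1 i) : y = z := by
  refine Subtype.ext (funext fun i => ?_)
  rw [← (periodic_of_shift_iterate_eq hy).map_mod_nat,
    ← (periodic_of_shift_iterate_eq hz).map_mod_nat]
  exact h _ (Nat.mod_lt i hn)

/-- The point that follows the first `m` letters of `y` and then all of `z`. -/
def concat (m : ℕ) (y z : Space A) (h : y.1 m = z.1 0) : Space A :=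
  ⟨fun i => if i < m then y.1 i else z.1 (i - m), fun i => by
    rcases lt_trichotomy (i + 1) m with hi | rfl | hi
    · simpa only [hi, i.lt_succ_self.trans hi, if_true] using y.2 i
    · simpa only [i.lt_succ_self, lt_irrefl, if_true, if_false, Nat.sub_self, ← h] using y.2 i
    · have him : m ≤ i := Nat.lt_succ_iff.mp hi
      simpa only [him.not_gt, hi.not_gt, if_false, Nat.sub_add_comm him] using z.2 (i - m)⟩

lemma concat_apply_of_lt {m : ℕ} {y z : Space A} (h : y.1 m = z.1 0) {i : ℕ} (hi : i < m) :
    (concat m y z h).1 i = y.1 i :=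
  if_pos hi

lemma concat_apply_of_le {m : ℕ} {y z : Space A} (h : y.1 m = z.1 0) {i : ℕ} (hi : i ≤ m) :
    (concat m y z h).1 i = y.1 i := by
  rcases hi.lt_or_eq with hi | rfl
  · exact concat_apply_of_lt h hi
  · simp only [concat, lt_irrefl, if_false, Nat.sub_self, h]

lemma shift_iterate_concat {m : ℕ} {y z : Space A} (h : y.1 m = z.1 0) :
    shift^[m] (concat m y z h) = z := by
  refine Subtype.ext (funext fun i => ?_)
  rw [shift_iterate_apply]
  simp only [concat, (Nat.le_add_left m i).not_gt, if_false, Nat.add_sub_cancel]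

/-- The periodic point that repeats the first `n` letters of `y`. -/
def periodize (n : ℕ) (hn : 0 < n) (y : Space A) (h : y.1 n = y.1 0) : Space A :=
  ⟨fun i => y.1 (i % n), fun i => by
    have step := y.2 (i % n)
    change A (y.1 (i % n)) (y.1 ((i + 1) % n)) = true
    have hmod : i % n + 1 ≤ n := Nat.mod_lt i hn
    rcases lt_or_eq_of_le hmod with hi | hi
    · rwa [← Nat.mod_add_mod, Nat.mod_eq_of_lt hi]
    · rw [hi, h] at step
      rwa [← Nat.mod_add_mod, hi, Nat.mod_self]⟩

lemma periodize_apply_of_lt {n : ℕ} (hn : 0 < n) {y : Space A} (h : y.1 n = y.1 0) {i : ℕ}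
    (hi : i < n) : (periodize n hn y h).1 i = y.1 i :=
  congrArg y.1 (Nat.mod_eq_of_lt hi)

lemma periodize_apply_of_le {n : ℕ} (hn : 0 < n) {y : Space A} (h : y.1 n = y.1 0) {i : ℕ}
    (hi : i ≤ n) : (periodize n hn y h).1 i = y.1 i := by
  rcases hi.lt_or_eq with hi | rfl
  · exact periodize_apply_of_lt hn h hi
  · exact (congrArg y.1 (Nat.mod_self i)).trans h.symm

lemma shift_iterate_periodize {n : ℕ} (hn : 0 < n) {y : Space A} (h : y.1 n = y.1 0) :
    shift^[n] (periodize n hn y h) = periodize n hn y h :=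
  Subtype.ext (funext fun i => (shift_iterate_apply n _ i).trans
    (congrArg y.1 (Nat.add_mod_right i n)))

lemma exists_basePoints [Nonempty (Space A)] :
    ∃ pt : S → Space A, ∀ z : Space A, (pt (z.1 0)).1 0 = z.1 0 :=
  ⟨Function.invFun fun z : Space A => z.1 0, fun z =>
    Function.invFun_eq (f := fun z : Space A => z.1 0) ⟨z, rfl⟩⟩

end Shift

section Cocycle

variable {S : Type*} {A : S → S → Bool} {G H : Type*} [Group G] [Group H] {ψ : Space A → G}

lemma TwoCoord.cocycle_congr (hψ : TwoCoord ψ) {n : ℕ} {y z : Space A}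
    (h : ∀ i ≤ n, y.1 i = z.1 i) : cocycle ψ n y = cocycle ψ n z := by
  induction n generalizing y z with
  | zero => rfl
  | succ n ih =>
    rw [cocycle, cocycle, hψ y z (h 0 (Nat.zero_le _)) (h 1 (Nat.succ_le_succ n.zero_le)),
      ih (z := shift z) fun i hi => h (i + 1) (Nat.succ_le_succ hi)]

lemma cocycle_add (ψ : Space A → G) (m n : ℕ) (y : Space A) :
    cocycle ψ (m + n) y = cocycle ψ m y * cocycle ψ n (shift^[m] y) := by
  induction m generalizing y with
  | zero => rw [zero_add, cocycle, one_mul, Function.iterate_zero_apply]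
  | succ m ih =>
    rw [Nat.succ_add, cocycle, cocycle, ih, mul_assoc, Function.iterate_succ_apply]

lemma cocycle_map (π : G →* H) (ψ : Space A → G) (n : ℕ) (y : Space A) :
    cocycle (fun x => π (ψ x)) n y = π (cocycle ψ n y) := by
  induction n generalizing y with
  | zero => exact (map_one π).symm
  | succ n ih => rw [cocycle, cocycle, ih, map_mul]

lemma T_iterate (ψ : Space A → G) (n : ℕ) (p : Space A × G) :
    (T ψ)^[n] p = (shift^[n] p.1, p.2 * cocycle ψ n p.1) := by
  induction n generalizing p with
  | zero => rw [cocycle, mul_one]; rfl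
  | succ n ih => rw [Function.iterate_succ_apply, ih, T, cocycle, mul_assoc]; rfl

end Cocycle

section Distortion

variable {S : Type*} {A : S → S → Bool} {f : Space A → ℝ} {C : ℝ}

lemma birk_add (f : Space A → ℝ) (m n : ℕ) (y : Space A) :
    birk f (m + n) y = birk f m y + birk f n (shift^[m] y) := by
  simp only [birk, Finset.sum_range_add, ← Function.iterate_add_apply, add_comm _ m]

lemma abs_birk_le {K : ℝ} (hK : ∀ x, |f x| ≤ K) (n : ℕ) (x : Space A) : |birk f n x| ≤ n * K := by
  refine (Finset.abs_sum_le_sum_abs _ _).trans ((Finset.sum_le_sum fun j _ => hK _).trans_eq ?_)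
  rw [Finset.sum_const, Finset.card_range, nsmul_eq_mul]

/-- Bowen's condition: Birkhoff sums of length `n` vary by at most `C` on cylinders of length
`n`. -/
def DistortionBound (f : Space A → ℝ) (C : ℝ) : Prop :=
  ∀ (n : ℕ) (y z : Space A), (∀ i < n, y.1 i = z.1 i) → birk f n y ≤ C + birk f n z

lemma HolderF.exists_distortionBound (hf : HolderF f) : ∃ C, DistortionBound f C := by
  obtain ⟨α, hα, C, hC, holder⟩ := hf
  set ρ : ℝ := 2 ^ (-α)
  have hρ0 : 0 ≤ ρ := by positivity
  have hρ1 : ρ < 1 := Real.rpow_lt_one_of_one_lt_of_neg one_lt_two (neg_neg_of_pos hα)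
  have rpow_eq (n : ℕ) : (2 : ℝ) ^ (-(n : ℝ) * α) = ρ ^ n := by
    rw [← Real.rpow_mul_natCast zero_le_two, neg_mul_comm, mul_comm]
  refine ⟨C * (1 - ρ)⁻¹, fun n y z hyz => ?_⟩
  have term_le {j : ℕ} (hj : j ∈ Finset.range n) :
      f (shift^[j] y) - f (shift^[j] z) ≤ C * ρ ^ (n - 1 - j) := by
    have hj' := Finset.mem_range.mp hj
    refine (le_abs_self _).trans ((holder (n - j) _ _ fun i hi => ?_).trans ?_)
    · rw [shift_iterate_apply, shift_iterate_apply]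
      exact hyz _ (Nat.add_lt_of_lt_sub hi)
    · rw [rpow_eq]
      exact mul_le_mul_of_nonneg_left (pow_le_pow_of_le_one hρ0 hρ1.le (by omega)) hC
  rw [← sub_le_iff_le_add]
  calc birk f n y - birk f n z
      = ∑ j ∈ Finset.range n, (f (shift^[j] y) - f (shift^[j] z)) :=
        (Finset.sum_sub_distrib _ _).symm
    _ ≤ ∑ j ∈ Finset.range n, C * ρ ^ (n - 1 - j) := Finset.sum_le_sum fun j => term_le
    _ = C * ∑ j ∈ Finset.range n, ρ ^ j := by
        rw [Finset.sum_range_reflect (fun j => C * ρ ^ j) n, Finset.mul_sum]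
    _ ≤ C * (1 - ρ)⁻¹ := by
        rw [← tsum_geometric_of_lt_one hρ0 hρ1]
        exact mul_le_mul_of_nonneg_left ((summable_geometric_of_lt_one hρ0 hρ1).sum_le_tsum _
          fun j _ => pow_nonneg hρ0 j) hC

lemma DistortionBound.exists_abs_le [Finite S] (hC : DistortionBound f C) :
    ∃ K, ∀ x, |f x| ≤ K := by
  rcases isEmpty_or_nonempty (Space A) with hA | hA
  · exact ⟨0, fun x => hA.elim x⟩
  obtain ⟨pt, hpt⟩ := exists_basePoints (A := A)
  obtain ⟨M, hM⟩ := Finite.exists_le fun b => |f (pt b)|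
  have le_add {y z : Space A} (h : y.1 0 = z.1 0) : f y ≤ C + f z := by
    have hbirk := hC 1 y z fun i hi => by rwa [Nat.lt_one_iff.mp hi]
    simpa only [birk, Finset.sum_range_one, Function.iterate_zero_apply] using hbirk
  refine ⟨C + M, fun x => abs_le.mpr ?_⟩
  have hMx := abs_le.mp (hM (x.1 0))
  constructor
  · linarith [le_add (hpt x)]
  · linarith [le_add (hpt x).symm]

end Distortion

section Loop

variable {S : Type*} {A : S → S → Bool} {G : Type*} [Group G] {ψ : Space A → G}
  {x y z : Space A} {m n : ℕ} {a b g : G}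

/-- `y` runs along a loop of length `n` at the letter `x 0`, with cocycle value `g`. Continuing the
loop by `x` itself makes a loop of length `n` determined by its first `n` letters. -/
structure IsLoop (ψ : Space A → G) (x : Space A) (n : ℕ) (g : G) (y : Space A) : Prop where
  shift_iterate_eq : shift^[n] y = x
  apply_zero : y.1 0 = x.1 0
  cocycle_eq : cocycle ψ n y = g

lemma IsLoop.apply_length (hy : IsLoop ψ x n g y) : y.1 n = y.1 0 :=
  (apply_eq_of_shift_iterate_eq hy.shift_iterate_eq).trans hy.apply_zero.symm

lemma isLoop_concat (hψ : TwoCoord ψ) (hx : x.1 0 = y.1 0) (h : y.1 n = x.1 0) :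
    IsLoop ψ x n (cocycle ψ n y) (concat n y x h) where
  shift_iterate_eq := shift_iterate_concat h
  apply_zero := (concat_apply_of_le h n.zero_le).trans hx.symm
  cocycle_eq := hψ.cocycle_congr fun _ => concat_apply_of_le h

lemma IsLoop.apply_eq_apply_zero (hy : IsLoop ψ x m a y) (hz : IsLoop ψ x n b z) :
    y.1 m = z.1 0 :=
  (apply_eq_of_shift_iterate_eq hy.shift_iterate_eq).trans hz.apply_zero.symm

lemma IsLoop.mul (hψ : TwoCoord ψ) (hy : IsLoop ψ x m a y) (hz : IsLoop ψ x n b z) :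
    IsLoop ψ x (m + n) (a * b) (concat m y z (hy.apply_eq_apply_zero hz)) where
  shift_iterate_eq := by
    rw [add_comm, Function.iterate_add_apply, shift_iterate_concat, hz.shift_iterate_eq]
  apply_zero := (concat_apply_of_le _ m.zero_le).trans hy.apply_zero
  cocycle_eq := by
    rw [cocycle_add, shift_iterate_concat, hz.cocycle_eq,
      hψ.cocycle_congr fun _ => concat_apply_of_le _, hy.cocycle_eq]

lemma IsLoop.eq_and_eq_of_concat_eq {a' b' : G} {y' z' : Space A} (hy : IsLoop ψ x m a y)
    (hz : IsLoop ψ x n b z) (hy' : IsLoop ψ x m a' y') (hz' : IsLoop ψ x n b' z')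
    (h : concat m y z (hy.apply_eq_apply_zero hz) =
      concat m y' z' (hy'.apply_eq_apply_zero hz')) : y = y' ∧ z = z' := by
  constructor
  · refine eq_of_shift_iterate_eq (fun i hi => ?_)
      (hy.shift_iterate_eq.trans hy'.shift_iterate_eq.symm)
    rw [← concat_apply_of_lt (hy.apply_eq_apply_zero hz) hi, h, concat_apply_of_lt _ hi]
  · rw [← shift_iterate_concat (hy.apply_eq_apply_zero hz), h, shift_iterate_concat]

/-- Let the dense orbit visit `[x 0] × {h}` at time `τ h`. If `τ h` is minimal, the visit at time
`τ (h * g)` comes later, and the orbit between the two visits is a loop with value `g`. -/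
lemma TransitiveExt.exists_isLoop (hψ : TwoCoord ψ) (ht : TransitiveExt ψ) (x : Space A) (g : G) :
    ∃ n y, IsLoop ψ x n g y := by
  obtain ⟨⟨p, g₀⟩, orbit_dense⟩ := ht
  choose τ hτ using fun h => orbit_dense 1 x h
  simp only [T_iterate] at hτ
  let h := Function.argmin τ
  obtain ⟨n, hn⟩ := Nat.exists_eq_add_of_le (Function.argmin_le τ (h * g))
  have hstart := (hτ h).1 0 one_pos
  have hend := (hτ (h * g)).1 0 one_pos
  have hcocycle := (hτ (h * g)).2
  rw [hn, add_comm, Function.iterate_add_apply, shift_iterate_apply, zero_add] at hend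
  rw [hn, cocycle_add, ← mul_assoc, (hτ h).2] at hcocycle
  exact ⟨n, _, mul_left_cancel hcocycle ▸ isLoop_concat hψ hstart.symm hend⟩

lemma TransitiveExt.nonempty_space (htrans : TransitiveExt ψ) : Nonempty (Space A) :=
  htrans.nonempty.map Prod.fst

/-- The loops counted by `loopSum`. -/
abbrev Loop (ψ : Space A → G) (x : Space A) (n : ℕ) (g : G) : Type _ :=
  {y : Space A // IsLoop ψ x n g y}

/-- The periodic points counted by `partitionSum`. -/
abbrev ReturnPoint (ψ : Space A → G) (n : ℕ) : Type _ :=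
  {x : Space A // shift^[n] x = x ∧ cocycle ψ n x = 1}

lemma Loop.injective_word :
    Function.Injective fun (y : Loop ψ x n g) (i : Fin n) => y.1.1 i := fun y z h =>
  Subtype.ext (eq_of_shift_iterate_eq (fun i hi => congrFun h ⟨i, hi⟩)
    (y.2.shift_iterate_eq.trans z.2.shift_iterate_eq.symm))

lemma ReturnPoint.injective_word (hn : 0 < n) :
    Function.Injective fun (z : ReturnPoint ψ n) (i : Fin n) => z.1.1 i := fun y z h =>
  Subtype.ext (eq_of_shift_iterate_eq_self hn y.2.1 z.2.1 fun i hi => congrFun h ⟨i, hi⟩)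

end Loop

section PartitionSum

variable {S : Type*} {A : S → S → Bool} {G H : Type*} [Group G] [Group H] {ψ : Space A → G}
  {f : Space A → ℝ} {C : ℝ} {x : Space A} {n : ℕ}

lemma tsum_le_mul_tsum_of_injective {α β : Type*} {φ : α → β} (hφ : Function.Injective φ)
    {v : α → ℝ≥0∞} {w : β → ℝ≥0∞} {c : ℝ≥0∞} (h : ∀ i, v i ≤ c * w (φ i)) :
    ∑' i, v i ≤ c * ∑' j, w j := calc
  ∑' i, v i ≤ ∑' i, c * w (φ i) := ENNReal.tsum_le_tsum h
  _ = c * ∑' i, w (φ i) := ENNReal.tsum_mul_left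
  _ ≤ c * ∑' j, w j := mul_le_mul_right (ENNReal.tsum_comp_le_tsum_of_injective hφ w) c

/-- The Boltzmann weight `exp (fⁿ y)`. -/
noncomputable def weight (f : Space A → ℝ) (n : ℕ) (y : Space A) : ℝ≥0∞ :=
  ENNReal.ofReal (Real.exp (birk f n y))

/-- The total weight of the loops of length `n` at `x 0` with cocycle value `g`. -/
noncomputable def loopSum (ψ : Space A → G) (f : Space A → ℝ) (x : Space A) (n : ℕ) (g : G) :
    ℝ≥0∞ :=
  ∑' y : Loop ψ x n g, weight f n y.1

/-- The partition function whose growth rate is `PGur`. -/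
noncomputable def partitionSum (ψ : Space A → G) (f : Space A → ℝ) (n : ℕ) : ℝ≥0∞ :=
  ∑' z : ReturnPoint ψ n, weight f n z.1

lemma weight_ne_zero (f : Space A → ℝ) (n : ℕ) (y : Space A) : weight f n y ≠ 0 :=
  (ENNReal.ofReal_pos.mpr (Real.exp_pos _)).ne'

lemma weight_ne_top (f : Space A → ℝ) (n : ℕ) (y : Space A) : weight f n y ≠ ⊤ :=
  ENNReal.ofReal_ne_top

lemma weight_add (f : Space A → ℝ) (m n : ℕ) (y : Space A) :
    weight f (m + n) y = weight f m y * weight f n (shift^[m] y) := by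
  rw [weight, weight, weight, birk_add, Real.exp_add, ENNReal.ofReal_mul (Real.exp_pos _).le]

lemma ofReal_exp_pow (t : ℝ) (n : ℕ) :
    ENNReal.ofReal (Real.exp t) ^ n = ENNReal.ofReal (Real.exp (n * t)) := by
  rw [← ENNReal.ofReal_pow (Real.exp_pos t).le, Real.exp_nat_mul]

lemma weight_le_pow {K : ℝ} (hK : ∀ x, |f x| ≤ K) (n : ℕ) (y : Space A) :
    weight f n y ≤ ENNReal.ofReal (Real.exp K) ^ n := by
  rw [ofReal_exp_pow]
  exact ENNReal.ofReal_le_ofReal (Real.exp_le_exp.mpr (abs_le.mp (abs_birk_le hK n y)).2)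

lemma pow_le_weight {K : ℝ} (hK : ∀ x, |f x| ≤ K) (n : ℕ) (y : Space A) :
    ENNReal.ofReal (Real.exp (-K)) ^ n ≤ weight f n y := by
  rw [ofReal_exp_pow, mul_neg]
  exact ENNReal.ofReal_le_ofReal (Real.exp_le_exp.mpr (abs_le.mp (abs_birk_le hK n y)).1)

lemma DistortionBound.weight_le (hC : DistortionBound f C) {y z : Space A}
    (h : ∀ i < n, y.1 i = z.1 i) : weight f n y ≤ ENNReal.ofReal (Real.exp C) * weight f n z := by
  rw [weight, weight, ← ENNReal.ofReal_mul (Real.exp_pos C).le, ← Real.exp_add]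
  exact ENNReal.ofReal_le_ofReal (Real.exp_le_exp.mpr (hC n y z h))

lemma PGur_eq_growthRate (ψ : Space A → G) (f : Space A → ℝ) :
    PGur ψ f = growthRate (partitionSum ψ f) := by
  have toReal_partitionSum (n : ℕ) :
      (partitionSum ψ f n).toReal = ∑' z : ReturnPoint ψ n, Real.exp (birk f n z.1) := by
    rw [partitionSum, ENNReal.tsum_toReal_eq fun _ => weight_ne_top _ _ _]
    exact tsum_congr fun z => ENNReal.toReal_ofReal (Real.exp_pos _).le
  simp only [PGur, growthRate, toReal_partitionSum]

lemma tsum_weight_le_pow [Finite S] {K : ℝ} (hK : ∀ x, |f x| ≤ K) {α : Type*} {p : α → Space A}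
    (hp : Function.Injective fun a (i : Fin n) => (p a).1 i) :
    ∑' a, weight f n (p a) ≤ (Nat.card S * ENNReal.ofReal (Real.exp K)) ^ n := calc
  ∑' a, weight f n (p a) ≤ ENNReal.ofReal (Real.exp K) ^ n * ∑' _ : Fin n → S, 1 :=
    tsum_le_mul_tsum_of_injective hp fun a => (weight_le_pow hK n _).trans_eq (mul_one _).symm
  _ = (Nat.card S * ENNReal.ofReal (Real.exp K)) ^ n := by
    rw [ENNReal.tsum_const, mul_one, ENat.card_eq_coe_natCard, Nat.card_fun, Nat.card_fin, mul_pow,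
      mul_comm]
    norm_cast

lemma loopSum_ne_top [Finite S] (hC : DistortionBound f C) (ψ : Space A → G) (x : Space A) (n : ℕ)
    (g : G) : loopSum ψ f x n g ≠ ⊤ := by
  obtain ⟨K, hK⟩ := hC.exists_abs_le
  exact ne_top_of_le_ne_top (by finiteness) (tsum_weight_le_pow hK Loop.injective_word)

lemma partitionSum_ne_top [Finite S] (hC : DistortionBound f C) (ψ : Space A → G) (hn : 0 < n) :
    partitionSum ψ f n ≠ ⊤ := by
  obtain ⟨K, hK⟩ := hC.exists_abs_le
  exact ne_top_of_le_ne_top (by finiteness)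
    (tsum_weight_le_pow hK (ReturnPoint.injective_word hn))

lemma isBoundedUnder_log_partitionSum [Finite S] (hC : DistortionBound f C) (ψ : Space A → G) :
    IsBoundedUnder (· ≤ ·) atTop fun n : ℕ => |Real.log (partitionSum ψ f n).toReal / n| := by
  obtain ⟨K, hK⟩ := hC.exists_abs_le
  refine isBoundedUnder_log_toReal_div (p := ENNReal.ofReal (Real.exp (-K)))
    (q := Nat.card S * ENNReal.ofReal (Real.exp K))
    (ENNReal.ofReal_pos.mpr (Real.exp_pos _)).ne' (by finiteness) ?_
  filter_upwards [eventually_gt_atTop 0] with n hn h0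
  obtain ⟨z, -⟩ := not_forall.mp (mt ENNReal.tsum_eq_zero.mpr h0)
  exact ⟨(pow_le_weight hK n z.1).trans (ENNReal.le_tsum z),
    tsum_weight_le_pow hK (ReturnPoint.injective_word hn)⟩

lemma quasiSupermultiplicative_loopSum (hψ : TwoCoord ψ) (hC : DistortionBound f C) (x : Space A) :
    QuasiSupermultiplicative (loopSum ψ f x) (ENNReal.ofReal (Real.exp C)) := by
  intro m n g
  have sum_eq : ∑' k, loopSum ψ f x m (g * k⁻¹) * loopSum ψ f x n k =
      ∑' p : Σ k : G, Loop ψ x m (g * k⁻¹) × Loop ψ x n k,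
        weight f m p.2.1.1 * weight f n p.2.2.1 := by
    rw [ENNReal.tsum_sigma']
    refine tsum_congr fun k => ?_
    rw [ENNReal.tsum_prod', loopSum, ← ENNReal.tsum_mul_right]
    exact tsum_congr fun y => ENNReal.tsum_mul_left.symm
  rw [sum_eq]
  let join (p : Σ k : G, Loop ψ x m (g * k⁻¹) × Loop ψ x n k) : Loop ψ x (m + n) g :=
    ⟨concat m p.2.1.1 p.2.2.1 _, inv_mul_cancel_right g p.1 ▸ p.2.1.2.mul hψ p.2.2.2⟩
  have join_injective : Function.Injective join := by
    rintro ⟨k, ⟨y, hy⟩, ⟨z, hz⟩⟩ ⟨k', ⟨y', hy'⟩, ⟨z', hz'⟩⟩ h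
    obtain ⟨rfl, rfl⟩ := hy.eq_and_eq_of_concat_eq hz hy' hz' (congrArg Subtype.val h)
    obtain rfl := hz.cocycle_eq.symm.trans hz'.cocycle_eq
    rfl
  refine tsum_le_mul_tsum_of_injective join_injective fun p => ?_
  have hjoin := p.2.1.2.apply_eq_apply_zero p.2.2.2
  change _ ≤ _ * weight f (m + n) (concat m p.2.1.1 p.2.2.1 hjoin)
  rw [weight_add, shift_iterate_concat, ← mul_assoc]
  gcongr
  exact hC.weight_le fun i hi => (concat_apply_of_lt hjoin hi).symm

lemma DistortionBound.tsum_weight_le (hC : DistortionBound f C) {α β : Type*} {p : α → Space A}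
    (hp : Function.Injective fun a (i : Fin n) => (p a).1 i) {r : β → Space A} (φ : α → β)
    (h : ∀ a, ∀ i < n, (p a).1 i = (r (φ a)).1 i) :
    ∑' a, weight f n (p a) ≤ ENNReal.ofReal (Real.exp C) * ∑' b, weight f n (r b) := by
  have φ_injective : Function.Injective φ := fun a b hab => hp <| funext fun i =>
    (h a i i.2).trans (hab ▸ (h b i i.2).symm)
  exact tsum_le_mul_tsum_of_injective φ_injective fun a => hC.weight_le (h a)

lemma TransitiveExt.exists_loopSum_ne_zero (hψ : TwoCoord ψ) (htrans : TransitiveExt ψ)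
    (f : Space A → ℝ) (x : Space A) (g : G) : ∃ n, loopSum ψ f x n g ≠ 0 := by
  obtain ⟨n, y, hy⟩ := htrans.exists_isLoop hψ x g
  exact ⟨n, fun h => weight_ne_zero f n y (ENNReal.tsum_eq_zero.mp h ⟨y, hy⟩)⟩

lemma loopSum_one_le (hψ : TwoCoord ψ) (hC : DistortionBound f C) (x : Space A) (hn : 0 < n) :
    loopSum ψ f x n 1 ≤ ENNReal.ofReal (Real.exp C) * partitionSum ψ f n :=
  hC.tsum_weight_le Loop.injective_word (r := fun z : ReturnPoint ψ n => z.1)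
    (fun y => ⟨periodize n hn y.1 y.2.apply_length, shift_iterate_periodize hn _,
      (hψ.cocycle_congr fun _ => periodize_apply_of_le hn _).trans y.2.cocycle_eq⟩)
    fun y _ hi => (periodize_apply_of_lt hn y.2.apply_length hi).symm

lemma partitionSum_le_map (π : G →* H) (ψ : Space A → G) (f : Space A → ℝ) (n : ℕ) :
    partitionSum ψ f n ≤ partitionSum (fun x => π (ψ x)) f n := by
  have cocycle_eq_one (z : ReturnPoint ψ n) : cocycle (fun x => π (ψ x)) n z.1 = 1 := by
    rw [cocycle_map, z.2.2, map_one]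
  let φ (z : ReturnPoint ψ n) : ReturnPoint (fun x => π (ψ x)) n := ⟨z.1, z.2.1, cocycle_eq_one z⟩
  exact ENNReal.tsum_comp_le_tsum_of_injective (f := φ)
    (fun y z h => Subtype.ext (congrArg (·.1) h)) fun z => weight f n z.1

lemma partitionSum_map_le_tsum_loopSum (hψ : TwoCoord ψ) (hC : DistortionBound f C) {π : G →* H}
    (hπ : π.ker ≤ commutator G) {pt : S → Space A} (hpt : ∀ z : Space A, (pt (z.1 0)).1 0 = z.1 0)
    (hn : 0 < n) :
    partitionSum (fun x => π (ψ x)) f n ≤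
      ENNReal.ofReal (Real.exp C) * ∑' b, ∑' k : commutator G, loopSum ψ f (pt b) n k := by
  have sum_eq : ∑' b, ∑' k : commutator G, loopSum ψ f (pt b) n k =
      ∑' p : Σ b : S, Σ k : commutator G, Loop ψ (pt b) n k, weight f n p.2.2.1 := by
    rw [ENNReal.tsum_sigma']
    refine tsum_congr fun b => ?_
    rw [ENNReal.tsum_sigma']
    rfl
  have cocycle_mem (z : ReturnPoint (fun x => π (ψ x)) n) : cocycle ψ n z.1 ∈ commutator G :=
    hπ (MonoidHom.mem_ker.mpr ((cocycle_map π ψ n z.1).symm.trans z.2.2))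
  have hjoin (z : ReturnPoint (fun x => π (ψ x)) n) : z.1.1 n = (pt (z.1.1 0)).1 0 :=
    (apply_eq_of_shift_iterate_eq z.2.1).trans (hpt z.1).symm
  rw [sum_eq]
  exact hC.tsum_weight_le (ReturnPoint.injective_word hn)
    (fun z => ⟨z.1.1 0, ⟨cocycle ψ n z.1, cocycle_mem z⟩, concat n z.1 _ (hjoin z),
      isLoop_concat hψ (hpt z.1) (hjoin z)⟩)
    fun z _ hi => (concat_apply_of_lt (hjoin z) hi).symm

end PartitionSum

section Pressure

variable {S : Type*} [Finite S] {A : S → S → Bool} {G H : Type*} [Group G] [Group H]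
  {ψ : Space A → G} {f : Space A → ℝ} {C : ℝ} {π : G →* H}

lemma eventually_partitionSum_map_eq_zero (hψ : TwoCoord ψ) (htrans : TransitiveExt ψ)
    (hC : DistortionBound f C) (hπ : π.ker ≤ commutator G) :
    ∀ᶠ n in atTop, partitionSum ψ f n = 0 → partitionSum (fun x => π (ψ x)) f n = 0 := by
  have := htrans.nonempty_space
  obtain ⟨pt, hpt⟩ := exists_basePoints (A := A)
  have loopSum_vanishes (b : S) : ∀ᶠ n in atTop, ∀ k ∈ commutator G,
      loopSum ψ f (pt b) n k ≠ 0 → loopSum ψ f (pt b) n 1 ≠ 0 :=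
    eventually_one_of_mem_commutator (quasiSupermultiplicative_loopSum hψ hC (pt b)).mul_ne_zero
      (htrans.exists_loopSum_ne_zero hψ f (pt b))
  filter_upwards [eventually_all.mpr loopSum_vanishes, eventually_gt_atTop 0] with n hloop hn h0
  have loopSum_one (b : S) : loopSum ψ f (pt b) n 1 = 0 := by
    simpa only [h0, mul_zero, nonpos_iff_eq_zero] using loopSum_one_le hψ hC (pt b) hn
  have loopSum_commutator (b : S) (k : commutator G) : loopSum ψ f (pt b) n k = 0 :=
    not_not.mp fun hk => hloop b k k.2 hk (loopSum_one b)
  simpa only [loopSum_commutator, tsum_zero, mul_zero, nonpos_iff_eq_zero]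
    using partitionSum_map_le_tsum_loopSum hψ hC hπ hpt hn

lemma tsum_commutator_loopSum_le (hψ : TwoCoord ψ) (htrans : TransitiveExt ψ)
    (hC : DistortionBound f C) (ham : Amenable G) {q : ℝ≥0∞} (hq : q ≠ 0) (hq' : q ≠ ⊤)
    (h : ∀ᶠ n in atTop, partitionSum ψ f n ≤ q ^ n) (x : Space A) (n : ℕ) :
    ∑' k : commutator G, loopSum ψ f x n k ≤ ENNReal.ofReal (Real.exp C) * q ^ n := by
  have loopSum_le : ∀ᶠ n in atTop, loopSum ψ f x n 1 ≤ ENNReal.ofReal (Real.exp C) * q ^ n := by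
    filter_upwards [h, eventually_gt_atTop 0] with n hle hn
    exact (loopSum_one_le hψ hC x hn).trans (mul_le_mul_right hle _)
  obtain ⟨B, hB, hone⟩ := exists_forall_le_mul_pow_of_eventually
    (fun n => loopSum_ne_top hC ψ x n 1) ENNReal.ofReal_ne_top hq hq' loopSum_le
  exact (quasiSupermultiplicative_loopSum hψ hC x).tsum_commutator_le ham ENNReal.ofReal_ne_top
    (htrans.exists_loopSum_ne_zero hψ f x) hB hq' hone n

lemma exists_partitionSum_map_le_mul_pow (hψ : TwoCoord ψ) (htrans : TransitiveExt ψ)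
    (hC : DistortionBound f C) (ham : Amenable G) (hπ : π.ker ≤ commutator G) {q : ℝ≥0∞}
    (hq : q ≠ 0) (hq' : q ≠ ⊤) (h : ∀ᶠ n in atTop, partitionSum ψ f n ≤ q ^ n) :
    ∃ D ≠ ⊤, ∀ᶠ n in atTop, partitionSum (fun x => π (ψ x)) f n ≤ D * q ^ n := by
  have := htrans.nonempty_space
  obtain ⟨pt, hpt⟩ := exists_basePoints (A := A)
  let E := ENNReal.ofReal (Real.exp C)
  refine ⟨E * (Nat.card S * E), by finiteness, ?_⟩
  filter_upwards [eventually_gt_atTop 0] with n hn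
  calc partitionSum (fun x => π (ψ x)) f n
      ≤ E * ∑' b, ∑' k : commutator G, loopSum ψ f (pt b) n k :=
        partitionSum_map_le_tsum_loopSum hψ hC hπ hpt hn
    _ ≤ E * ∑' _ : S, E * q ^ n := by
        gcongr with b
        exact tsum_commutator_loopSum_le hψ htrans hC ham hq hq' h (pt b) n
    _ = E * (Nat.card S * E) * q ^ n := by
        rw [ENNReal.tsum_const, ENat.card_eq_coe_natCard, ENat.toENNReal_coe]
        ring

end Pressure

theorem statement4_general {S : Type*} [Finite S] {A : S → S → Bool} {G H : Type*} [Group G]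
    [Group H] {ψ : Space A → G} (hψ : TwoCoord ψ) (htrans : TransitiveExt ψ) {f : Space A → ℝ}
    {C : ℝ} (hC : DistortionBound f C) (ham : Amenable G) {π : G →* H}
    (hπ : π.ker ≤ commutator G) :
    PGur ψ f = PGur (fun x => π (ψ x)) f := by
  have hzero := eventually_partitionSum_map_eq_zero hψ htrans hC hπ
  have hbdd := isBoundedUnder_log_partitionSum hC ψ
  have hbdd_map := isBoundedUnder_log_partitionSum hC fun x => π (ψ x)
  rw [PGur_eq_growthRate, PGur_eq_growthRate]
  refine le_antisymm (growthRate_mono hbdd hbdd_map ?_ ?_ hzero)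
    (growthRate_le_of_forall_pow hbdd hbdd_map ?_ ?_ fun q hq hq' hle =>
      exists_partitionSum_map_le_mul_pow hψ htrans hC ham hπ hq hq' hle)
  · filter_upwards [eventually_gt_atTop 0] with n hn using partitionSum_ne_top hC _ hn
  · exact Eventually.of_forall (partitionSum_le_map π ψ f)
  · filter_upwards [eventually_gt_atTop 0] with n hn using partitionSum_ne_top hC ψ hn
  · exact Eventually.of_forall fun n hn => nonpos_iff_eq_zero.mp (hn ▸ partitionSum_le_map π ψ f n)

end DS

/-- If `T_ψ` is transitive, `f` is Hölder continuous and `G` is amenable,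
then `P_Gur(f,T_ψ) = P_Gur(f,T_{ψ^{ab}})`. -/
theorem statement4
    {S : Type*} [Fintype S] {A : S → S → Bool} (hA : Aperiodic A)
    {G : Type*} [Group G] [Countable G]
    (ψ : Space A → G) (hψ : TwoCoord ψ) (htrans : TransitiveExt ψ)
    (f : Space A → ℝ) (hf : HolderF f) (ham : Amenable G) :
    PGur ψ f = PGur (fun x => Abelianization.of (ψ x)) f := by
  obtain ⟨C, hC⟩ := hf.exists_distortionBound
  exact statement4_general hψ htrans hC ham (Abelianization.ker_of G).le
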